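/- arXiv:math/0606728 — 2 statements merged into one kernel-verified Lean document; each statement's English description precedes it below -/
import Mathlib

section
/- A finite poset P is an initial segment of a finite upper semilattice if and only if there do not exist incomparable elements x0, x1 ∈ P together with two incomparable elements y0, y1 ∈ P such that y0 and y1 are both minimal upper bounds of {x0, x1} in P. -/
/-- `x` is a nonzero join-irreducible element (relative to the least element `z`):
`x ≠ z` and whenever `x = u ⊔ v` then `x = u` or `x = v`. -/
def JoinIrredAbove {D : Type*} [Lattice D] (z x : D) : Prop :=
  x ≠ z ∧ ∀ u v : D, x = u ⊔ v → x = u ∨ x = v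

/-- A finite distributive lattice is double diamond-like if it has at least two
elements, its poset of nonzero join-irreducible elements has no greatest and no
least element, and its least element is not the meet of two nonzero
join-irreducible elements one of which is maximal among them. -/
def DoubleDiamondLike (D : Type*) [DistribLattice D] [Fintype D] : Prop :=
  Nontrivial D ∧ ∃ z : D, IsBot z ∧
    ¬ (∃ m, JoinIrredAbove z m ∧ ∀ x, JoinIrredAbove z x → x ≤ m) ∧
    ¬ (∃ m, JoinIrredAbove z m ∧ ∀ x, JoinIrredAbove z x → m ≤ x) ∧
    ¬ (∃ x y, JoinIrredAbove z x ∧ JoinIrredAbove z y ∧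
        (∀ w, JoinIrredAbove z w → y ≤ w → y = w) ∧ z = x ⊓ y)

/-- `L` contains a double diamond-like lattice as a subinterval: some interval
`[a,b]` of `L` (with its induced order) is isomorphic to a finite distributive
double diamond-like lattice. -/
def HasDoubleDiamondSubinterval (L : Type*) [Lattice L] : Prop :=
  ∃ a b : L, a ≤ b ∧ ∃ (D : Type) (_ : DistribLattice D) (_ : Fintype D),
    DoubleDiamondLike D ∧ Nonempty (Set.Icc a b ≃o D)

/-- A poset `P` is an initial segment of a finite upper semilattice: there is an
order embedding of `P` into a finite join-semilattice with downward closed image. -/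
def IsInitialSegmentOfFiniteUpperSemilattice (P : Type*) [PartialOrder P] : Prop :=
  ∃ (S : Type) (_ : SemilatticeSup S) (_ : Fintype S) (e : P ↪o S),
    IsLowerSet (Set.range e)

/-- `y` is a minimal upper bound of `{x0, x1}`. -/
def IsMinimalUpperBound {P : Type*} [PartialOrder P] (x0 x1 y : P) : Prop :=
  x0 ≤ y ∧ x1 ≤ y ∧ ∀ z, z < y → ¬ (x0 ≤ z ∧ x1 ≤ z)

theorem exists_minimal_ub_le {P : Type} [PartialOrder P] [Fintype P] (a b w : P)
    (ha : a ≤ w) (hb : b ≤ w) : ∃ y, y ≤ w ∧ IsMinimalUpperBound a b y := by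
  obtain ⟨y, hyw, hy⟩ := (Set.toFinite {z : P | a ≤ z ∧ b ≤ z}).exists_le_minimal
    (show w ∈ {z : P | a ≤ z ∧ b ≤ z} from ⟨ha, hb⟩)
  exact ⟨y, hyw, hy.1.1, hy.1.2, fun z hz h => (hy.2 h hz.le).not_gt hz⟩

theorem exists_lub_withTop {P : Type} [PartialOrder P] [Fintype P]
    (h : ¬ ∃ x0 x1 y0 y1 : P, (¬ x0 ≤ x1 ∧ ¬ x1 ≤ x0) ∧ (¬ y0 ≤ y1 ∧ ¬ y1 ≤ y0) ∧
      IsMinimalUpperBound x0 x1 y0 ∧ IsMinimalUpperBound x0 x1 y1) (a b : WithTop P) :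
    ∃ s, a ≤ s ∧ b ≤ s ∧ ∀ c, a ≤ c → b ≤ c → s ≤ c := by
  by_cases hab : a ≤ b
  · exact ⟨b, hab, le_rfl, fun c _ h => h⟩
  by_cases hba : b ≤ a
  · exact ⟨a, le_rfl, hba, fun c h _ => h⟩
  induction a using WithTop.recTopCoe with
  | top => exact absurd le_top hba
  | coe a =>
  induction b using WithTop.recTopCoe with
  | top => exact absurd le_top hab
  | coe b =>
  by_cases hw : ∃ w : P, a ≤ w ∧ b ≤ w
  · obtain ⟨w, haw, hbw⟩ := hw
    obtain ⟨y, -, hy⟩ := exists_minimal_ub_le a b w haw hbw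
    refine ⟨(y : WithTop P), WithTop.coe_le_coe.2 hy.1, WithTop.coe_le_coe.2 hy.2.1, ?_⟩
    intro c hac hbc
    induction c using WithTop.recTopCoe with
    | top => exact le_top
    | coe c =>
    rw [WithTop.coe_le_coe] at *
    obtain ⟨y', hy'c, hy'⟩ := exists_minimal_ub_le a b c hac hbc
    refine le_trans ?_ hy'c
    by_contra hn
    by_cases hn' : y' ≤ y
    · exact hy.2.2 y' (lt_of_le_not_ge hn' hn) ⟨hy'.1, hy'.2.1⟩
    · exact h ⟨a, b, y, y', ⟨hab, hba⟩, ⟨hn, hn'⟩, hy, hy'⟩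
  · refine ⟨⊤, le_top, le_top, ?_⟩
    intro c hac hbc
    induction c using WithTop.recTopCoe with
    | top => exact le_top
    | coe c => exact absurd ⟨c, WithTop.coe_le_coe.1 hac, WithTop.coe_le_coe.1 hbc⟩ hw

/-- A finite poset is an initial segment of a finite upper semilattice iff it
contains no two incomparable elements with two incomparable minimal upper
bounds. -/
theorem initial_segment_iff_no_two_minimal_upper_bounds (P : Type)
    [PartialOrder P] [Fintype P] :
    IsInitialSegmentOfFiniteUpperSemilattice P ↔
    ¬ ∃ x0 x1 y0 y1 : P, (¬ x0 ≤ x1 ∧ ¬ x1 ≤ x0) ∧ (¬ y0 ≤ y1 ∧ ¬ y1 ≤ y0) ∧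
      IsMinimalUpperBound x0 x1 y0 ∧ IsMinimalUpperBound x0 x1 y1 := by
  constructor
  · rintro ⟨S, _, _, e, he⟩ ⟨x0, x1, y0, y1, -, hy, h0, h1⟩
    have k0 : e x0 ⊔ e x1 ≤ e y0 := sup_le (e.monotone h0.1) (e.monotone h0.2.1)
    have k1 : e x0 ⊔ e x1 ≤ e y1 := sup_le (e.monotone h1.1) (e.monotone h1.2.1)
    obtain ⟨z, hz⟩ := he k0 ⟨y0, rfl⟩
    rw [← hz] at k0 k1
    have z0 : z ≤ y0 := e.le_iff_le.1 k0
    have z1 : z ≤ y1 := e.le_iff_le.1 k1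
    have u0 : x0 ≤ z := e.le_iff_le.1 (hz ▸ le_sup_left)
    have u1 : x1 ≤ z := e.le_iff_le.1 (hz ▸ le_sup_right)
    have : z = y0 := by
      by_contra hne
      exact h0.2.2 z (lt_of_le_of_ne z0 hne) ⟨u0, u1⟩
    exact hy.1 (this ▸ z1)
  · intro h
    choose s hl hr hs using exists_lub_withTop h
    refine ⟨WithTop P,
      { (inferInstance : PartialOrder (WithTop P)) with
        sup := s
        le_sup_left := hl
        le_sup_right := hr
        sup_le := fun a b c => hs a b c },
      (inferInstance : Fintype (Option P)), WithTop.coeOrderHom, ?_⟩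
    rintro a b hba ⟨x, rfl⟩
    induction b using WithTop.recTopCoe with
    | top => exact absurd (top_le_iff.1 hba) WithTop.coe_ne_top
    | coe b => exact ⟨b, rfl⟩
end

section
/- Let L be a finite distributive lattice, let a ≤ b in L, and let x0, x1, y0, y1 be nonzero join-irreducible elements of the interval [a,b] (i.e., each is > a and is join-irreducible in the lattice [a,b]) such that x0 and x1 are incomparable, y0 and y1 are incomparable, x0 ≤ y0, x1 ≤ y0, and x0 ≤ y1. If y0 = z ⊔ w for some incomparable z, w ∈ L, then there exist incomparable z0, z1 ∈ L with y0 = z0 ⊔ z1, z0 ⊓ x0 ≠ z0 ⊓ x1, and ¬(z0 ≤ y1). -/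
/-- `x` is a nonzero join-irreducible element of the interval `[a,b]`. -/
def IccJoinIrred {L : Type*} [Lattice L] (a b x : L) : Prop :=
  x ∈ Set.Icc a b ∧ x ≠ a ∧
    ∀ u v : L, u ∈ Set.Icc a b → v ∈ Set.Icc a b → x = u ⊔ v → x = u ∨ x = v

/-- The auxiliary splitting lemma: if `y0` splits as a join of two incomparable
elements of `L`, then the splitting can be chosen with `z0 ⊓ x0 ≠ z0 ⊓ x1` and
`¬(z0 ≤ y1)`. -/
theorem splitting_lemma (L : Type) [DistribLattice L] [Fintype L]
    (a b : L) (hab : a ≤ b) (x0 x1 y0 y1 : L)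
    (hx0 : IccJoinIrred a b x0) (hx1 : IccJoinIrred a b x1)
    (hy0 : IccJoinIrred a b y0) (hy1 : IccJoinIrred a b y1)
    (hx : ¬ x0 ≤ x1 ∧ ¬ x1 ≤ x0) (hy : ¬ y0 ≤ y1 ∧ ¬ y1 ≤ y0)
    (h00 : x0 ≤ y0) (h10 : x1 ≤ y0) (h01 : x0 ≤ y1)
    (z w : L) (hzw : ¬ z ≤ w ∧ ¬ w ≤ z) (hsplit : y0 = z ⊔ w) :
    ∃ z0 z1 : L, (¬ z0 ≤ z1 ∧ ¬ z1 ≤ z0) ∧ y0 = z0 ⊔ z1 ∧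
      z0 ⊓ x0 ≠ z0 ⊓ x1 ∧ ¬ z0 ≤ y1 := by
  have key : ∀ c : L, y0 = c ⊔ a → ¬ y0 ≤ c →
      ∃ z0 z1 : L, (¬ z0 ≤ z1 ∧ ¬ z1 ≤ z0) ∧ y0 = z0 ⊔ z1 ∧
      z0 ⊓ x0 ≠ z0 ⊓ x1 ∧ ¬ z0 ≤ y1 := by
    intro c hc hcy
    refine ⟨c, a, ⟨?_, ?_⟩, hc, ?_, ?_⟩
    · intro h
      exact hy0.2.1 (by rw [hc]; exact sup_eq_right.mpr h)
    · intro h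
      exact hcy (by rw [hc]; exact sup_le le_rfl h)
    · intro h
      have e : ∀ x : L, a ≤ x → x ≤ y0 → x = (c ⊓ x) ⊔ a := by
        intro x h1 h2
        rw [sup_inf_right, ← hc, sup_eq_left.mpr h1]
        exact (inf_eq_right.mpr h2).symm
      have e0 := e x0 hx0.1.1 h00
      have e1 := e x1 hx1.1.1 h10
      rw [h, ← e1] at e0
      exact hx.1 e0.le
    · intro h
      exact hy.1 (by rw [hc]; exact sup_le h hy1.1.1)
  have hz : z ≤ y0 := hsplit ▸ le_sup_left
  have hw : w ≤ y0 := hsplit ▸ le_sup_right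
  have ha := hy0.1.1
  have hb := hy0.1.2
  rcases hy0.2.2 (z ⊔ a) (w ⊔ a) ⟨le_sup_right, (sup_le hz ha).trans hb⟩
    ⟨le_sup_right, (sup_le hw ha).trans hb⟩
    (by rw [← sup_sup_distrib_right, ← hsplit]; exact (sup_eq_left.mpr ha).symm) with h | h
  · exact key z h (fun h' => hzw.2 (hw.trans h'))
  · exact key w h (fun h' => hzw.1 (hz.trans h'))
end
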